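/- Let A ≥ 1, let m ≥ 1 be an integer, and define φ(x) = 2A arctan(e^{x/A}). Then for all x ∈ ℝ, |(φ^m)'''(x)| ≤ 5 m² A^{−2} (φ^m)'(x), where φ^m denotes the m-th pointwise power of φ. In particular, for every β > 0 and every m, if A is large enough (depending on m and β) then |(φ^m)'''| ≤ 2^{−9} β (φ^m)' on ℝ. -/

import Mathlib

lemma aux_bound (A : ℝ) (hA : 1 ≤ A) (k : ℕ) (x : ℝ) :
    |deriv (deriv (deriv
          (fun y : ℝ => (2 * A * Real.arctan (Real.exp (y / A))) ^ (k + 1)))) x|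
        ≤ ((k : ℝ) + 1) ^ 2 / A ^ 2 *
          deriv (fun y : ℝ => (2 * A * Real.arctan (Real.exp (y / A))) ^ (k + 1)) x ∧
    0 ≤ deriv (fun y : ℝ => (2 * A * Real.arctan (Real.exp (y / A))) ^ (k + 1)) x := by
  have hA0 : 0 < A := by linarith
  have hAne : A ≠ 0 := hA0.ne'
  set p : ℝ → ℝ := fun y => 2 * A * Real.arctan (Real.exp (y / A)) with hp
  set s : ℝ → ℝ := fun y => 2 * Real.exp (y / A) / (1 + Real.exp (y / A) ^ 2) with hs
  set t : ℝ → ℝ := fun y => (Real.exp (y / A) ^ 2 - 1) / (1 + Real.exp (y / A) ^ 2) with ht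
  have hE : ∀ y : ℝ, HasDerivAt (fun y => Real.exp (y / A)) (Real.exp (y / A) * (1 / A)) y :=
    fun y => ((hasDerivAt_id y).div_const A).exp
  have hp0 : ∀ y, 0 < p y := fun y => by
    have := Real.arctan_pos.2 (Real.exp_pos (y / A))
    simp only [hp]; positivity
  have hs0 : ∀ y, 0 < s y := fun y => by simp only [hs]; positivity
  have hpd : ∀ y, HasDerivAt p (s y) y := fun y => by
    refine HasDerivAt.congr_deriv (((hE y).arctan).const_mul (2 * A)) ?_
    simp only [hs]; field_simp
  have hE2 : ∀ y, HasDerivAt (fun y => Real.exp (y / A) ^ 2)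
      (2 * Real.exp (y / A) ^ 2 / A) y := fun y => by
    refine HasDerivAt.congr_deriv ((hE y).pow 2) ?_
    field_simp
    norm_num; ring
  have hsd : ∀ y, HasDerivAt s (-(s y * t y / A)) y := fun y => by
    have h0 : 1 + Real.exp (y / A) ^ 2 ≠ 0 := by positivity
    refine HasDerivAt.congr_deriv (((hE y).const_mul 2).div ((hE2 y).const_add 1) h0) ?_
    simp only [hs, ht]; field_simp; ring
  have htd : ∀ y, HasDerivAt t (s y ^ 2 / A) y := fun y => by
    have h0 : 1 + Real.exp (y / A) ^ 2 ≠ 0 := by positivity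
    refine HasDerivAt.congr_deriv (((hE2 y).sub_const 1).div ((hE2 y).const_add 1) h0) ?_
    simp only [hs]; field_simp; ring
  have hst : ∀ y, s y ^ 2 + t y ^ 2 = 1 := fun y => by
    have h0 : 1 + Real.exp (y / A) ^ 2 ≠ 0 := by positivity
    simp only [hs, ht]; field_simp; ring
  have hsp : ∀ y, s y * A ≤ p y := fun y => by
    have h1 := Real.sin_le (x := 2 * Real.arctan (Real.exp (y / A)))
      (by have := Real.arctan_pos.2 (Real.exp_pos (y / A)); positivity)
    have h2 : Real.sin (2 * Real.arctan (Real.exp (y / A))) = s y := by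
      rw [Real.sin_two_mul, Real.sin_arctan, Real.cos_arctan]
      have h3 : Real.sqrt (1 + Real.exp (y / A) ^ 2) ^ 2 = 1 + Real.exp (y / A) ^ 2 :=
        Real.sq_sqrt (by positivity)
      have h4 : Real.sqrt (1 + Real.exp (y / A) ^ 2) ≠ 0 := by positivity
      simp only [hs]
      rw [← h3]; field_simp
      simp only [h3]
    rw [h2] at h1
    simp only [hp]; nlinarith
  set r : ℝ → ℝ := fun y => s y / p y with hr
  have hrd : ∀ y, HasDerivAt r (-(r y * t y / A) - r y ^ 2) y := fun y => by
    have h0 := (hp0 y).ne'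
    refine HasDerivAt.congr_deriv ((hsd y).div (hpd y) h0) ?_
    simp only [hr]; field_simp
  have hr0 : ∀ y, 0 < r y := fun y => div_pos (hs0 y) (hp0 y)
  have hr1 : ∀ y, r y ≤ 1 / A := fun y => by
    simp only [hr]; rw [div_le_div_iff₀ (hp0 y) hA0]; linarith [hsp y]
  set G : ℝ → ℝ := fun y => ((k : ℝ) + 1) * p y ^ (k + 1) * r y with hG
  have hF : ∀ y, HasDerivAt (fun y => p y ^ (k + 1)) (G y) y := fun y => by
    have h0 := (hp0 y).ne'
    refine HasDerivAt.congr_deriv ((hpd y).pow (k + 1)) ?_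
    simp only [hG, hr, Nat.add_sub_cancel]; push_cast; field_simp; ring
  set q : ℝ → ℝ := fun y => (k : ℝ) * r y - t y / A with hq
  have hGd : ∀ y, HasDerivAt G (G y * q y) y := fun y => by
    refine HasDerivAt.congr_deriv (((hF y).const_mul ((k : ℝ) + 1)).mul (hrd y)) ?_
    simp only [hG, hq]; ring
  have hqd : ∀ y, HasDerivAt q ((k : ℝ) * (-(r y * t y / A) - r y ^ 2) - s y ^ 2 / A / A) y :=
    fun y => ((hrd y).const_mul (k : ℝ)).sub ((htd y).div_const A)
  have e1 : deriv (fun y => p y ^ (k + 1)) = G := funext fun y => (hF y).deriv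
  have e2 : deriv G = fun y => G y * q y := funext fun y => (hGd y).deriv
  have hG0 : 0 ≤ G x := by
    have := hp0 x
    have := hr0 x
    simp only [hG]; positivity
  have e3 := ((hGd x).mul (hqd x)).deriv
  change |deriv (deriv (deriv (fun y => p y ^ (k + 1)))) x| ≤
    _ * deriv (fun y => p y ^ (k + 1)) x ∧ 0 ≤ deriv (fun y => p y ^ (k + 1)) x
  rw [e1, e2]
  refine ⟨?_, hG0⟩
  have e4 : deriv (fun y => G y * q y) x = ((k : ℝ) * (k - 1) * (r x * A) ^ 2
      - 3 * k * ((r x * A) * t x) + (t x ^ 2 - s x ^ 2)) / A ^ 2 * G x := by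
    refine Eq.trans e3 ?_
    simp only [hq]; field_simp; ring
  rw [e4, abs_mul, abs_of_nonneg hG0, abs_div, abs_of_pos (by positivity : 0 < A ^ 2)]
  gcongr
  have hv0 : 0 ≤ r x * A := (mul_pos (hr0 x) hA0).le
  have hv1 : r x * A ≤ 1 := by have := hr1 x; rwa [le_div_iff₀ hA0] at this
  generalize r x * A = v at hv0 hv1 ⊢
  have h1 := hst x
  have hk : 0 ≤ (k : ℝ) * (k - 1) := by
    rcases Nat.eq_zero_or_pos k with h | h
    · simp [h]
    · have : (1 : ℝ) ≤ k := by exact_mod_cast h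
      exact mul_nonneg (by linarith) (by linarith)
  have hk0 : (0 : ℝ) ≤ k := Nat.cast_nonneg k
  have ht1 : |t x| ≤ 1 := abs_le_one_iff_mul_self_le_one.2 (by nlinarith [sq_nonneg (s x)])
  have hvt : |v * t x| ≤ 1 := by
    rw [abs_mul, abs_of_nonneg hv0]; exact mul_le_one₀ hv1 (abs_nonneg _) ht1
  have hvv : v ^ 2 ≤ 1 := pow_le_one₀ hv0 hv1
  obtain ⟨a1, a2⟩ := abs_le.1 hvt
  have b1 := mul_le_mul_of_nonneg_left hvv hk
  have b0 := mul_nonneg hk (sq_nonneg v)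
  have c1 := mul_le_mul_of_nonneg_left a1 hk0
  have c2 := mul_le_mul_of_nonneg_left a2 hk0
  have d1 := sq_nonneg (s x)
  have d2 := sq_nonneg (t x)
  rw [abs_le]
  constructor <;> nlinarith

/-- Third-derivative bound for powers of `φ(x) = 2A arctan(e^{x/A})`:
`|(φ^m)'''| ≤ 5m²A⁻²(φ^m)'`, and for any `β > 0`, `m ≥ 1`, taking `A` large enough
gives `|(φ^m)'''| ≤ 2⁻⁹ β (φ^m)'`. -/
theorem stmt_11 :
    (∀ A : ℝ, 1 ≤ A → ∀ m : ℕ, 1 ≤ m → ∀ x : ℝ,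
      |deriv (deriv (deriv
          (fun y : ℝ => (2 * A * Real.arctan (Real.exp (y / A))) ^ m))) x|
        ≤ 5 * (m : ℝ) ^ 2 / A ^ 2 *
          deriv (fun y : ℝ => (2 * A * Real.arctan (Real.exp (y / A))) ^ m) x) ∧
    (∀ β : ℝ, 0 < β → ∀ m : ℕ, 1 ≤ m → ∃ A₀ : ℝ, 1 ≤ A₀ ∧
      ∀ A : ℝ, A₀ ≤ A → ∀ x : ℝ,
      |deriv (deriv (deriv
          (fun y : ℝ => (2 * A * Real.arctan (Real.exp (y / A))) ^ m))) x|
        ≤ (2:ℝ) ^ (-9 : ℤ) * β *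
          deriv (fun y : ℝ => (2 * A * Real.arctan (Real.exp (y / A))) ^ m) x) := by
  have key : ∀ A : ℝ, 1 ≤ A → ∀ m : ℕ, 1 ≤ m → ∀ x : ℝ,
      |deriv (deriv (deriv
          (fun y : ℝ => (2 * A * Real.arctan (Real.exp (y / A))) ^ m))) x|
        ≤ (m : ℝ) ^ 2 / A ^ 2 *
          deriv (fun y : ℝ => (2 * A * Real.arctan (Real.exp (y / A))) ^ m) x ∧
      0 ≤ deriv (fun y : ℝ => (2 * A * Real.arctan (Real.exp (y / A))) ^ m) x := by
    intro A hA m hm x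
    obtain ⟨k, rfl⟩ := Nat.exists_eq_add_of_le' hm
    have := aux_bound A hA k x
    push_cast
    exact this
  constructor
  · intro A hA m hm x
    obtain ⟨h1, h2⟩ := key A hA m hm x
    refine h1.trans (mul_le_mul_of_nonneg_right ?_ h2)
    gcongr
    nlinarith [sq_nonneg (m : ℝ)]
  · intro β hβ m hm
    refine ⟨1 + 512 * (m : ℝ) ^ 2 / β, ?_, ?_⟩
    · have : 0 ≤ 512 * (m : ℝ) ^ 2 / β := by positivity
      linarith
    intro A hA x
    have h0 : 0 ≤ 512 * (m : ℝ) ^ 2 / β := by positivity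
    have hA1 : 1 ≤ A := by linarith
    obtain ⟨h1, h2⟩ := key A hA1 m hm x
    refine h1.trans (mul_le_mul_of_nonneg_right ?_ h2)
    rw [div_le_iff₀ (by positivity)]
    have h3 : 512 * (m : ℝ) ^ 2 / β ≤ A ^ 2 := by nlinarith
    rw [div_le_iff₀ hβ] at h3
    have h4 : (2 : ℝ) ^ (-9 : ℤ) = 1 / 512 := by norm_num
    rw [h4]; linarith
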